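/- Let q̂ be a random vector uniformly distributed on the unit sphere S^{m−1} of ℝ^m, let 1 ≤ s < m and K ≥ 2 be integers, and let t₂, t₃ ∈ [0,1) be constants with (K−1)t₂² < t₃² and ζ := (m−s)[t₃² − (K−1)t₂²] / (s(1 − t₃²)) > 1. Then P[ Σ_{i=1}^s q̂_i² + (K−1)t₂² Σ_{i=s+1}^m q̂_i² > t₃² ] ≤ 2e^{−ε²}, where ε = [ −(√s + ζs/√(m−s)) + √( (√s + ζs/√(m−s))² + 2s(ζ−1) ) ] / 2. -/

import Mathlib

open MeasureTheory Finset

/-- The rotation-invariant probability measure on the unit sphere `S^{m−1}` of `ℝ^m`,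
encoded as a probability measure on `ℝ^m` concentrated on the unit sphere and invariant
under every linear isometry of `ℝ^m`. -/
def IsUniformOnSphere {m : ℕ} (ν : Measure (EuclideanSpace ℝ (Fin m))) : Prop :=
  IsProbabilityMeasure ν ∧ ν {x | ‖x‖ = 1}ᶜ = 0 ∧
    ∀ O : EuclideanSpace ℝ (Fin m) ≃ₗᵢ[ℝ] EuclideanSpace ℝ (Fin m),
      Measure.map O ν = ν

/-!
Normalizing a standard Gaussian vector of `ℝ^m` gives a rotation-invariant law on the sphere, and
there is only one such law. On the sphere the event in question is contained in the cone
`z * ∑_{i > s} q_i² < ∑_{i ≤ s} q_i²`, with `z = ζ s / (m - s)`, and the probability of a cone can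
be computed with the Gaussian vector itself. The cone is then a right tail event for the weighted
chi-square variable with weights `1` on the first `s` coordinates and `-z` on the others, to which
the Laurent–Massart bound applies; `ε` is the positive root of the quadratic equation which matches
the threshold in that bound.
-/

section SubGamma

open ProbabilityTheory Real

variable {Ω : Type*} {mΩ : MeasurableSpace Ω} {μ : Measure Ω}

/-- `X` is sub-gamma on the right tail with variance factor `v` and scale `c`: its moment
generating function at `t` is at most `exp (v t² / (2 (1 - c t)))` for all `t ≥ 0` with `c t < 1`.
Such bounds add up over independent variables and give Bernstein-type tail bounds. Integrability is
required since `mgf` takes the junk value `0` at non-integrable exponentials. -/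
structure HasSubgammaMGF (X : Ω → ℝ) (v c : ℝ) (μ : Measure Ω) : Prop where
  integrable_exp_mul : ∀ t, 0 ≤ t → c * t < 1 → Integrable (fun ω ↦ exp (t * X ω)) μ
  mgf_le : ∀ t, 0 ≤ t → c * t < 1 → mgf X μ t ≤ exp (v * t ^ 2 / (2 * (1 - c * t)))

namespace HasSubgammaMGF

lemma aemeasurable {X : Ω → ℝ} {v c : ℝ} (h : HasSubgammaMGF X v c μ) : AEMeasurable X μ := by
  have hc : 0 < |c| + 1 := by positivity
  have hlt : c * (|c| + 1)⁻¹ < 1 := by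
    rw [← div_eq_mul_inv, div_lt_one hc]
    linarith [le_abs_self c]
  exact aemeasurable_of_aemeasurable_exp_mul (inv_ne_zero hc.ne')
    (h.integrable_exp_mul _ (by positivity) hlt).aemeasurable

lemma sum_of_iIndepFun {ι : Type*} {X : ι → Ω → ℝ} {v : ι → ℝ} {c : ℝ} (hindep : iIndepFun X μ)
    (s : Finset ι) (h : ∀ i, HasSubgammaMGF (X i) (v i) c μ) :
    HasSubgammaMGF (∑ i ∈ s, X i) (∑ i ∈ s, v i) c μ := by
  have := hindep.isProbabilityMeasure
  have hmgf (t : ℝ) : mgf (∑ i ∈ s, X i) μ t = ∏ i ∈ s, mgf (X i) μ t :=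
    hindep.mgf_sum₀ (fun i ↦ (h i).aemeasurable) s
  refine ⟨fun t ht hct ↦ ?_, fun t ht hct ↦ ?_⟩
  · rw [← mgf_pos_iff, hmgf]
    exact prod_pos fun i _ ↦ mgf_pos ((h i).integrable_exp_mul t ht hct)
  · rw [hmgf, sum_mul, sum_div, exp_sum]
    exact prod_le_prod (fun _ _ ↦ mgf_nonneg) fun i _ ↦ (h i).mgf_le t ht hct

theorem measureReal_ge_le [IsFiniteMeasure μ] {X : Ω → ℝ} {v c x : ℝ}
    (h : HasSubgammaMGF X v c μ) (hv : 0 < v) (hc : 0 ≤ c) (hx : 0 ≤ x) :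
    μ.real {ω | √(2 * v * x) + c * x ≤ X ω} ≤ exp (-x) := by
  obtain ⟨σ, hσ, rfl⟩ : ∃ σ, 0 < σ ∧ v = σ ^ 2 := ⟨√v, sqrt_pos.2 hv, (sq_sqrt hv.le).symm⟩
  obtain ⟨ρ, hρ, rfl⟩ : ∃ ρ, 0 ≤ ρ ∧ x = ρ ^ 2 / 2 :=
    ⟨√(2 * x), sqrt_nonneg _, by rw [sq_sqrt (by positivity)]; ring⟩
  have hthreshold : √(2 * σ ^ 2 * (ρ ^ 2 / 2)) = σ * ρ := by
    rw [show 2 * σ ^ 2 * (ρ ^ 2 / 2) = (σ * ρ) ^ 2 by ring, sqrt_sq (by positivity)]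
  -- The optimal Chernoff parameter.
  let t := ρ / (σ + c * ρ)
  have ht : 0 ≤ t := by positivity
  have hct : 1 - c * t = σ / (σ + c * ρ) := by
    simp only [t]
    field_simp
    ring
  have hct1 : c * t < 1 := by
    have : 0 < 1 - c * t := hct ▸ by positivity
    linarith
  calc μ.real {ω | √(2 * σ ^ 2 * (ρ ^ 2 / 2)) + c * (ρ ^ 2 / 2) ≤ X ω}
      ≤ exp (-t * (σ * ρ + c * (ρ ^ 2 / 2))) * mgf X μ t := by
        rw [hthreshold]
        exact measure_ge_le_exp_mul_mgf _ ht (h.integrable_exp_mul t ht hct1)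
    _ ≤ exp (-t * (σ * ρ + c * (ρ ^ 2 / 2))) * exp (σ ^ 2 * t ^ 2 / (2 * (1 - c * t))) := by
        gcongr
        exact h.mgf_le t ht hct1
    _ = exp (-(ρ ^ 2 / 2)) := by
        rw [← exp_add, hct]
        congr 1
        simp only [t]
        field_simp
        ring

end HasSubgammaMGF

end SubGamma

section ChiSquare

open ProbabilityTheory Real

lemma neg_log_one_sub_le_of_nonneg {x : ℝ} (hx : 0 ≤ x) (hx1 : x < 1) :
    -log (1 - x) ≤ x + x ^ 2 / (2 * (1 - x)) := by
  have hpos : 0 < 1 - x := by linarith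
  have hsinh := self_le_sinh_iff.2 (neg_nonneg.2 (log_nonpos hpos.le (by linarith)))
  rw [sinh_eq, neg_neg, exp_neg, exp_log hpos] at hsinh
  convert! hsinh using 1
  field_simp
  ring

lemma neg_log_one_sub_le_of_nonpos {x : ℝ} (hx : x ≤ 0) : -log (1 - x) ≤ x + x ^ 2 / 2 := by
  have hlog : 2 * -x / (-x + 2) ≤ log (1 - x) := by
    simpa [sub_eq_add_neg] using le_log_one_add_of_nonneg (neg_nonneg.2 hx)
  have hrat : -x - x ^ 2 / 2 ≤ 2 * -x / (-x + 2) := by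
    rw [le_div_iff₀ (by linarith)]
    nlinarith [pow_nonneg (neg_nonneg.2 hx) 3]
  linarith

lemma neg_log_one_sub_le {x y : ℝ} (hxy : x ≤ y) (hy : 0 ≤ y) (hy1 : y < 1) :
    -log (1 - x) ≤ x + x ^ 2 / (2 * (1 - y)) := by
  have : 0 < 1 - y := by linarith
  rcases le_total 0 x with hx | hx
  · refine (neg_log_one_sub_le_of_nonneg hx (by linarith)).trans ?_
    gcongr
  · refine (neg_log_one_sub_le_of_nonpos hx).trans ?_
    gcongr
    linarith

variable {Ω : Type*} {mΩ : MeasurableSpace Ω} {μ : Measure Ω}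

lemma mgf_sq_of_hasLaw_gaussianReal {X : Ω → ℝ} (hX : HasLaw X (gaussianReal 0 1) μ) {t : ℝ}
    (ht : 2 * t < 1) : mgf (fun ω ↦ X ω ^ 2) μ t = (√(1 - 2 * t))⁻¹ := by
  have hdensity (x : ℝ) : gaussianPDFReal 0 1 x • exp (t * x ^ 2) =
      (√(2 * π))⁻¹ * exp (-(1 / 2 - t) * x ^ 2) := by
    simp only [gaussianPDFReal_def, smul_eq_mul, NNReal.coe_one, mul_one, sub_zero]
    rw [mul_assoc, ← exp_add]
    congr 2
    ring
  have hne : 1 - 2 * t ≠ 0 := by linarith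
  have : 1 / 2 - t ≠ 0 := by linarith
  calc mgf (fun ω ↦ X ω ^ 2) μ t = ∫ x, exp (t * x ^ 2) ∂gaussianReal 0 1 :=
        hX.integral_comp (f := fun x ↦ exp (t * x ^ 2)) (by fun_prop)
    _ = (√(2 * π))⁻¹ * √(π / (1 / 2 - t)) := by
        simp_rw [integral_gaussianReal_eq_integral_smul one_ne_zero, hdensity]
        rw [integral_const_mul, integral_gaussian]
    _ = (√(1 - 2 * t))⁻¹ := by
        rw [← sqrt_inv, ← sqrt_inv, ← sqrt_mul (by positivity)]
        congr 1
        field_simp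

lemma mgf_mul_sq_sub_one_of_hasLaw_gaussianReal {X : Ω → ℝ} (hX : HasLaw X (gaussianReal 0 1) μ)
    {a t : ℝ} (ht : 2 * (a * t) < 1) :
    mgf (fun ω ↦ a * (X ω ^ 2 - 1)) μ t = exp (-log (1 - 2 * (a * t)) / 2 - a * t) := by
  have hpos : 0 < 1 - 2 * (a * t) := by linarith
  simp_rw [mgf_const_mul, sub_eq_add_neg _ (1 : ℝ), mgf_add_const,
    mgf_sq_of_hasLaw_gaussianReal hX ht]
  rw [← exp_log (sqrt_pos.2 hpos), log_sqrt hpos.le, ← exp_neg, ← exp_add]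
  congr 1
  ring

lemma hasSubgammaMGF_mul_sq_sub_one {X : Ω → ℝ} (hX : HasLaw X (gaussianReal 0 1) μ) {a A : ℝ}
    (ha : a ≤ A) (hA : 0 ≤ A) :
    HasSubgammaMGF (fun ω ↦ a * (X ω ^ 2 - 1)) (2 * a ^ 2) (2 * A) μ := by
  have := hX.isProbabilityMeasure
  have hle {t : ℝ} (ht : 0 ≤ t) : 2 * (a * t) ≤ 2 * A * t := by
    rw [mul_assoc]
    gcongr
  refine ⟨fun t ht hAt ↦ ?_, fun t ht hAt ↦ ?_⟩
  · rw [← mgf_pos_iff, mgf_mul_sq_sub_one_of_hasLaw_gaussianReal hX ((hle ht).trans_lt hAt)]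
    exact exp_pos _
  · rw [mgf_mul_sq_sub_one_of_hasLaw_gaussianReal hX ((hle ht).trans_lt hAt), exp_le_exp]
    have hlog := neg_log_one_sub_le (hle ht) (by positivity) hAt
    calc -log (1 - 2 * (a * t)) / 2 - a * t
        ≤ (2 * (a * t) + (2 * (a * t)) ^ 2 / (2 * (1 - 2 * A * t))) / 2 - a * t := by gcongr
      _ = 2 * a ^ 2 * t ^ 2 / (2 * (1 - 2 * A * t)) := by ring

/-- The Laurent–Massart bound, for weights of either sign. -/
theorem measureReal_sum_mul_sq_sub_one_ge_le {ι : Type*} [Fintype ι] {X : ι → Ω → ℝ}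
    (hindep : iIndepFun X μ) (hX : ∀ i, HasLaw (X i) (gaussianReal 0 1) μ) {a : ι → ℝ} {A x : ℝ}
    (ha : ∀ i, a i ≤ A) (hA : 0 ≤ A) (hpos : 0 < ∑ i, a i ^ 2) (hx : 0 ≤ x) :
    μ.real {ω | 2 * √((∑ i, a i ^ 2) * x) + 2 * A * x ≤ ∑ i, a i * (X i ω ^ 2 - 1)} ≤
      exp (-x) := by
  have := hindep.isProbabilityMeasure
  have hindep' : iIndepFun (fun i ω ↦ a i * (X i ω ^ 2 - 1)) μ :=
    hindep.comp (fun i y ↦ a i * (y ^ 2 - 1)) fun i ↦ by fun_prop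
  have hsum := HasSubgammaMGF.sum_of_iIndepFun hindep' univ
    fun i ↦ hasSubgammaMGF_mul_sq_sub_one (hX i) (ha i) hA
  rw [← mul_sum] at hsum
  have hsqrt : √(2 * (2 * ∑ i, a i ^ 2) * x) = 2 * √((∑ i, a i ^ 2) * x) := by
    rw [show 2 * (2 * ∑ i, a i ^ 2) * x = 2 ^ 2 * ((∑ i, a i ^ 2) * x) by ring,
      sqrt_mul (by positivity), sqrt_sq zero_le_two]
  simpa only [hsqrt, Finset.sum_apply] using
    hsum.measureReal_ge_le (by positivity) (by positivity) hx

end ChiSquare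

section RotationInvariance

open ProbabilityTheory

variable {E : Type*} [NormedAddCommGroup E] [InnerProductSpace ℝ E] [MeasurableSpace E]
  [BorelSpace E]

lemma charFun_eq_of_norm_eq {μ : Measure E} (hμ : ∀ O : E ≃ₗᵢ[ℝ] E, μ.map O = μ) {t u : E}
    (htu : ‖t‖ = ‖u‖) : charFun μ t = charFun μ u := by
  let O := (ℝ ∙ (t - u))ᗮ.reflection
  have hO : O t = u := Submodule.reflection_sub htu
  calc charFun μ t = ∫ x, Complex.exp (inner ℝ (O x) (O t) * Complex.I) ∂μ := by
        simp only [charFun_apply, LinearIsometryEquiv.inner_map_map]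
    _ = charFun (μ.map O) u := by
        rw [charFun_apply, hO,
          integral_map O.continuous.aemeasurable (Continuous.aestronglyMeasurable (by fun_prop))]
    _ = charFun μ u := by rw [hμ O]

lemma charFun_eq_integral_charFun_smul {μ ν : Measure E} [IsProbabilityMeasure ν]
    (hμ : ∀ O : E ≃ₗᵢ[ℝ] E, μ.map O = μ) (hν : ∀ᵐ y ∂ν, ‖y‖ = 1) (t : E) :
    charFun μ t = ∫ y, charFun μ (‖t‖ • y) ∂ν := by
  have hconst : ∀ᵐ y ∂ν, charFun μ (‖t‖ • y) = charFun μ t := by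
    filter_upwards [hν] with y hy
    exact charFun_eq_of_norm_eq hμ (by simp [norm_smul, hy])
  simp [integral_congr_ae hconst]

lemma integral_charFun_smul_comm [SecondCountableTopology E] (μ ν : Measure E) [IsFiniteMeasure μ]
    [IsFiniteMeasure ν] (r : ℝ) :
    ∫ y, charFun μ (r • y) ∂ν = ∫ x, charFun ν (r • x) ∂μ := by
  have hint : Integrable (Function.uncurry fun y x : E ↦
      Complex.exp (inner ℝ x (r • y) * Complex.I)) (ν.prod μ) := by
    refine .of_bound (C := 1) (Continuous.aestronglyMeasurable (by fun_prop))
      (.of_forall fun p ↦ ?_)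
    exact (Complex.norm_exp_ofReal_mul_I _).le
  simp only [charFun_apply]
  rw [integral_integral_swap hint]
  simp only [inner_smul_right, real_inner_comm]

end RotationInvariance

section UniformOnSphere

open ProbabilityTheory

variable {m : ℕ} {ν : Measure (EuclideanSpace ℝ (Fin m))}

lemma IsUniformOnSphere.ae_norm_eq_one (hν : IsUniformOnSphere ν) : ∀ᵐ x ∂ν, ‖x‖ = 1 := hν.2.1

-- Rotation invariance makes `charFun ν t` the average of `charFun ν` over the sphere of radius
-- `‖t‖`, which is symmetric in the averaged and the averaging measure.
theorem IsUniformOnSphere.unique {ν' : Measure (EuclideanSpace ℝ (Fin m))}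
    (hν : IsUniformOnSphere ν) (hν' : IsUniformOnSphere ν') : ν = ν' := by
  have := hν.1
  have := hν'.1
  refine Measure.ext_of_charFun (funext fun t ↦ ?_)
  calc charFun ν t = ∫ y, charFun ν (‖t‖ • y) ∂ν' :=
        charFun_eq_integral_charFun_smul hν.2.2 hν'.ae_norm_eq_one t
    _ = ∫ x, charFun ν' (‖t‖ • x) ∂ν := integral_charFun_smul_comm ν ν' ‖t‖
    _ = charFun ν' t := (charFun_eq_integral_charFun_smul hν'.2.2 hν.ae_norm_eq_one t).symm

lemma IsUniformOnSphere.nontrivial (hν : IsUniformOnSphere ν) :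
    Nontrivial (EuclideanSpace ℝ (Fin m)) := by
  have := hν.1
  obtain ⟨x, hx⟩ := hν.ae_norm_eq_one.exists
  exact ⟨x, 0, fun h ↦ by simp [h] at hx⟩

lemma measurable_normalize {E : Type*} [NormedAddCommGroup E] [NormedSpace ℝ E]
    [MeasurableSpace E] [BorelSpace E] [SecondCountableTopology E] :
    Measurable (NormedSpace.normalize : E → E) := by
  unfold NormedSpace.normalize
  fun_prop

lemma isUniformOnSphere_map_normalize {μ : Measure (EuclideanSpace ℝ (Fin m))}
    [IsProbabilityMeasure μ] [NullSingletonClass μ]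
    (hμ : ∀ O : EuclideanSpace ℝ (Fin m) ≃ₗᵢ[ℝ] EuclideanSpace ℝ (Fin m), μ.map O = μ) :
    IsUniformOnSphere (μ.map NormedSpace.normalize) := by
  refine ⟨Measure.isProbabilityMeasure_map measurable_normalize.aemeasurable, ?_, fun O ↦ ?_⟩
  · rw [Measure.map_apply measurable_normalize
      (measurableSet_eq_fun (by fun_prop) (by fun_prop)).compl]
    refine measure_mono_null (fun x hx ↦ ?_) (measure_singleton (0 : EuclideanSpace ℝ (Fin m)))
    simpa [NormedSpace.norm_normalize_eq_one_iff] using hx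
  · have hcomm : O ∘ NormedSpace.normalize = NormedSpace.normalize ∘ O :=
      funext fun x ↦ by simp [NormedSpace.normalize]
    rw [Measure.map_map (by fun_prop) measurable_normalize, hcomm,
      ← Measure.map_map measurable_normalize (by fun_prop), hμ O]

lemma IsUniformOnSphere.measure_cone_eq {μ : Measure (EuclideanSpace ℝ (Fin m))}
    [IsProbabilityMeasure μ] [NullSingletonClass μ] (hν : IsUniformOnSphere ν)
    (hμ : ∀ O : EuclideanSpace ℝ (Fin m) ≃ₗᵢ[ℝ] EuclideanSpace ℝ (Fin m), μ.map O = μ)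
    {C : Set (EuclideanSpace ℝ (Fin m))} (hC : MeasurableSet C)
    (hcone : ∀ r : ℝ, 0 < r → ∀ x ∈ C, r • x ∈ C) : ν C = μ C := by
  have hpreimage : NormedSpace.normalize ⁻¹' C = C := by
    ext x
    rcases eq_or_ne x 0 with rfl | hx
    · simp
    · refine ⟨fun h ↦ ?_, hcone _ (inv_pos.2 (norm_pos_iff.2 hx)) x⟩
      simpa using hcone ‖x‖ (norm_pos_iff.2 hx) _ h
  rw [hν.unique (isUniformOnSphere_map_normalize hμ), Measure.map_apply measurable_normalize hC,
    hpreimage]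

lemma nullSingletonClass_stdGaussian {E : Type*} [NormedAddCommGroup E] [InnerProductSpace ℝ E]
    [FiniteDimensional ℝ E] [MeasurableSpace E] [BorelSpace E] [Nontrivial E] :
    NullSingletonClass (stdGaussian E) := by
  refine IsGaussian.nullSingletonClass fun x hx ↦ ?_
  obtain ⟨t, ht⟩ := exists_ne (0 : E)
  have hvar := variance_dual_stdGaussian (innerSL ℝ t)
  exact ht (by simpa [hx] using hvar.symm)

theorem IsUniformOnSphere.measure_cone_eq_pi_gaussianReal (hν : IsUniformOnSphere ν)
    {C : Set (EuclideanSpace ℝ (Fin m))} (hC : MeasurableSet C)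
    (hcone : ∀ r : ℝ, 0 < r → ∀ x ∈ C, r • x ∈ C) :
    ν C = Measure.pi (fun _ ↦ gaussianReal 0 1) (WithLp.toLp 2 ⁻¹' C) := by
  have := hν.nontrivial
  have := nullSingletonClass_stdGaussian (E := EuclideanSpace ℝ (Fin m))
  rw [hν.measure_cone_eq (fun O ↦ stdGaussian_map O) hC hcone, ← map_pi_eq_stdGaussian,
    Measure.map_apply (by fun_prop) hC]

end UniformOnSphere

section BlockCone

open ProbabilityTheory Real

lemma sum_ite_mem_eq_sum_add_sum_compl {ι M : Type*} [Fintype ι] [DecidableEq ι] [AddCommMonoid M]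
    (S : Finset ι) (f g : ι → M) :
    ∑ i, (if i ∈ S then f i else g i) = ∑ i ∈ S, f i + ∑ i ∈ Sᶜ, g i := by
  rw [sum_ite, filter_univ_mem, filter_notMem_eq_sdiff, compl_eq_univ_sdiff]

theorem measureReal_pi_gaussianReal_block_cone_le {ι : Type*} [Fintype ι] [DecidableEq ι]
    (S : Finset ι) {z ε : ℝ} (hz : 0 ≤ z) (hε : 0 < ε)
    (h : 2 * (√(#S) + z * √(#Sᶜ)) * ε + 2 * ε ^ 2 ≤ z * #Sᶜ - #S) :
    (Measure.pi fun _ : ι ↦ gaussianReal 0 1).real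
      {x | z * ∑ i ∈ Sᶜ, x i ^ 2 < ∑ i ∈ S, x i ^ 2} ≤ exp (-ε ^ 2) := by
  let a : ι → ℝ := fun i ↦ if i ∈ S then 1 else -z
  have ha (i : ι) : a i ≤ 1 := by
    simp only [a]
    split_ifs <;> linarith
  have hsum (x : ι → ℝ) : ∑ i, a i * (x i ^ 2 - 1) =
      (∑ i ∈ S, x i ^ 2 - z * ∑ i ∈ Sᶜ, x i ^ 2) - (#S - z * #Sᶜ) := by
    simp only [a, ite_mul, sum_ite_mem_eq_sum_add_sum_compl, ← mul_sum, sum_sub_distrib, sum_const,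
      nsmul_eq_mul]
    ring
  have hsq : ∑ i, a i ^ 2 = #S + z ^ 2 * #Sᶜ := by
    simp only [a, ite_pow, sum_ite_mem_eq_sum_add_sum_compl, sum_const, nsmul_eq_mul]
    ring
  have hmean : 0 < z * #Sᶜ := by
    have : 0 ≤ 2 * (√(#S) + z * √(#Sᶜ)) * ε := by positivity
    have : 0 < ε ^ 2 := by positivity
    have : (0 : ℝ) ≤ #S := by positivity
    linarith
  have hpos : 0 < ∑ i, a i ^ 2 := by
    rw [hsq, sq, mul_assoc]
    have := pos_of_mul_pos_left hmean (Nat.cast_nonneg _)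
    positivity
  have hsqrt : √((∑ i, a i ^ 2) * ε ^ 2) ≤ (√(#S) + z * √(#Sᶜ)) * ε := by
    refine sqrt_le_iff.2 ⟨by positivity, ?_⟩
    rw [hsq, mul_pow, add_sq, mul_pow, sq_sqrt (Nat.cast_nonneg _), sq_sqrt (Nat.cast_nonneg _)]
    gcongr
    exact le_add_of_nonneg_right (by positivity)
  refine (measureReal_mono fun x hx ↦ ?_).trans <| measureReal_sum_mul_sq_sub_one_ge_le
    (iIndepFun_pi fun _ ↦ aemeasurable_id)
    (fun i ↦ (measurePreserving_eval (fun _ ↦ gaussianReal 0 1) i).hasLaw)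
    ha zero_le_one hpos (sq_nonneg ε)
  simp only [Set.mem_ofPred_eq, id_eq, hsum] at hx ⊢
  linarith

theorem IsUniformOnSphere.measure_block_cone_le {m : ℕ} {ν : Measure (EuclideanSpace ℝ (Fin m))}
    (hν : IsUniformOnSphere ν) (S : Finset (Fin m)) {z ε : ℝ} (hz : 0 ≤ z) (hε : 0 < ε)
    (h : 2 * (√(#S) + z * √(#Sᶜ)) * ε + 2 * ε ^ 2 ≤ z * #Sᶜ - #S) :
    ν {q | z * ∑ i ∈ Sᶜ, q i ^ 2 < ∑ i ∈ S, q i ^ 2} ≤ ENNReal.ofReal (exp (-ε ^ 2)) := by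
  rw [hν.measure_cone_eq_pi_gaussianReal (measurableSet_lt (by fun_prop) (by fun_prop)),
    ← ofReal_measureReal]
  · exact ENNReal.ofReal_le_ofReal (measureReal_pi_gaussianReal_block_cone_le S hz hε h)
  · intro r hr x hx
    simp only [Set.mem_ofPred_eq, PiLp.smul_apply, smul_eq_mul, mul_pow, ← mul_sum] at hx ⊢
    rw [mul_left_comm]
    gcongr

lemma mul_sum_compl_lt_sum_of_norm_eq_one {ι : Type*} [Fintype ι] [DecidableEq ι] {S : Finset ι}
    {q : EuclideanSpace ℝ ι} (hq : ‖q‖ = 1) {c τ z : ℝ} (hτ : τ < 1) (hz : z * (1 - τ) = τ - c)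
    (h : τ < ∑ i ∈ S, q i ^ 2 + c * ∑ i ∈ Sᶜ, q i ^ 2) :
    z * ∑ i ∈ Sᶜ, q i ^ 2 < ∑ i ∈ S, q i ^ 2 := by
  have hone : ∑ i ∈ S, q i ^ 2 + ∑ i ∈ Sᶜ, q i ^ 2 = 1 := by
    rw [sum_add_sum_compl, ← EuclideanSpace.real_norm_sq_eq, hq, one_pow]
  generalize ∑ i ∈ S, q i ^ 2 = x, ∑ i ∈ Sᶜ, q i ^ 2 = y at h hone ⊢
  refine lt_of_mul_lt_mul_left ?_ (sub_nonneg.2 hτ.le)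
  calc (1 - τ) * (z * y) = z * (1 - τ) * y := by ring
    _ = τ * (x + y) - c * y - τ * x := by rw [hz]; ring
    _ < (1 - τ) * x := by rw [hone]; linarith

lemma pos_and_quadratic_eq_of_eq_root {W D ε : ℝ} (hD : 0 < D)
    (hε : ε = (-W + √(W ^ 2 + 2 * D)) / 2) : 0 < ε ∧ 2 * W * ε + 2 * ε ^ 2 = D := by
  have hlt : W < √(W ^ 2 + 2 * D) := lt_sqrt_of_sq_lt (by linarith)
  have hsq : (2 * ε + W) ^ 2 = W ^ 2 + 2 * D := by
    rw [show 2 * ε + W = √(W ^ 2 + 2 * D) by rw [hε]; ring, sq_sqrt (by positivity)]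
  exact ⟨by linarith, by linarith⟩

end BlockCone

theorem stmt_14_general {m : ℕ} {ν : Measure (EuclideanSpace ℝ (Fin m))}
    (hν : IsUniformOnSphere ν) (S : Finset (Fin m)) {c τ ζ ε : ℝ} (hτ : τ < 1)
    (hζdef : ζ = ((m : ℝ) - #S) * (τ - c) / (#S * (1 - τ))) (hζ : 1 < ζ)
    (hε : ε = (-(Real.sqrt #S + ζ * #S / Real.sqrt ((m : ℝ) - #S)) +
      Real.sqrt ((Real.sqrt #S + ζ * #S / Real.sqrt ((m : ℝ) - #S)) ^ 2 +
        2 * #S * (ζ - 1))) / 2) :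
    ν {q | τ < ∑ i ∈ S, q i ^ 2 + c * ∑ i ∈ Sᶜ, q i ^ 2} ≤
      ENNReal.ofReal (Real.exp (-ε ^ 2)) := by
  have hcompl : (m : ℝ) - #S = #Sᶜ := by
    rw [sub_eq_iff_eq_add', ← Nat.cast_add, card_add_card_compl, Fintype.card_fin]
  rw [hcompl] at hζdef hε
  have hn : (0 : ℝ) < #Sᶜ := (Nat.cast_nonneg _).lt_of_ne' fun h ↦ by norm_num [hζdef, h] at hζ
  have hs : (0 : ℝ) < #S := (Nat.cast_nonneg _).lt_of_ne' fun h ↦ by norm_num [hζdef, h] at hζ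
  let z := ζ * #S / #Sᶜ
  have hz : z * (1 - τ) = τ - c := by
    have : 0 < 1 - τ := by linarith
    simp only [z, hζdef]
    field_simp
  have hzsqrt : z * Real.sqrt #Sᶜ = ζ * #S / Real.sqrt #Sᶜ := by
    rw [div_mul_eq_mul_div, mul_div_assoc, Real.sqrt_div_self', mul_one_div]
  obtain ⟨hε0, hquad⟩ :=
    pos_and_quadratic_eq_of_eq_root (mul_pos hs (sub_pos.2 hζ)) (hε.trans (by rw [mul_assoc 2]))
  have hthreshold : 2 * (Real.sqrt #S + z * Real.sqrt #Sᶜ) * ε + 2 * ε ^ 2 = z * #Sᶜ - #S := by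
    rw [hzsqrt, hquad, div_mul_cancel₀ _ hn.ne']
    ring
  have hsub : ∀ᵐ q ∂ν, τ < ∑ i ∈ S, q i ^ 2 + c * ∑ i ∈ Sᶜ, q i ^ 2 →
      z * ∑ i ∈ Sᶜ, q i ^ 2 < ∑ i ∈ S, q i ^ 2 := by
    filter_upwards [hν.ae_norm_eq_one] with q hq
    exact mul_sum_compl_lt_sum_of_norm_eq_one hq hτ hz
  exact (measure_mono_ae hsub).trans
    (hν.measure_block_cone_le S (by positivity) hε0 hthreshold.le)

/-- Let `q̂` be uniform on `S^{m−1}`, `1 ≤ s < m`, `K ≥ 2`, and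
`t₂, t₃ ∈ [0,1)` with `(K−1)t₂² < t₃²` and
`ζ := (m−s)[t₃² − (K−1)t₂²]/(s(1 − t₃²)) > 1`.  Then
`P[∑_{i≤s} q̂_i² + (K−1)t₂² ∑_{i>s} q̂_i² > t₃²] ≤ 2e^{−ε²}`, where
`ε = [−(√s + ζs/√(m−s)) + √((√s + ζs/√(m−s))² + 2s(ζ−1))]/2`. -/
theorem stmt_14 (m s K : ℕ) (hs : 1 ≤ s) (hsm : s < m) (hK : 2 ≤ K)
    (ν : Measure (EuclideanSpace ℝ (Fin m))) (hν : IsUniformOnSphere ν)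
    (t₂ t₃ : ℝ) (ht₂0 : 0 ≤ t₂) (ht₂1 : t₂ < 1) (ht₃0 : 0 ≤ t₃) (ht₃1 : t₃ < 1)
    (ht : ((K : ℝ) - 1) * t₂ ^ 2 < t₃ ^ 2)
    (ζ : ℝ)
    (hζdef : ζ = ((m : ℝ) - s) * (t₃ ^ 2 - ((K : ℝ) - 1) * t₂ ^ 2) /
      (s * (1 - t₃ ^ 2)))
    (hζ : 1 < ζ)
    (ε : ℝ)
    (hε : ε = (-(Real.sqrt s + ζ * s / Real.sqrt ((m : ℝ) - s)) +
      Real.sqrt ((Real.sqrt s + ζ * s / Real.sqrt ((m : ℝ) - s)) ^ 2 +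
        2 * s * (ζ - 1))) / 2) :
    ν {q | t₃ ^ 2 < (∑ i ∈ univ.filter (fun i : Fin m => (i : ℕ) < s), q i ^ 2) +
        ((K : ℝ) - 1) * t₂ ^ 2 *
          ∑ i ∈ univ.filter (fun i : Fin m => s ≤ (i : ℕ)), q i ^ 2} ≤
      ENNReal.ofReal (2 * Real.exp (-ε ^ 2)) := by
  have hcard : #(univ.filter fun i : Fin m ↦ (i : ℕ) < s) = s := by
    rw [Fin.card_filter_val_lt, min_eq_right hsm.le]
  have hbound := stmt_14_general hν _ (pow_lt_one₀ ht₃0 ht₃1 two_ne_zero) (hcard.symm ▸ hζdef) hζ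
    (hcard.symm ▸ hε)
  simp only [compl_filter, not_lt] at hbound
  exact hbound.trans (ENNReal.ofReal_le_ofReal (by linarith [Real.exp_pos (-ε ^ 2)]))
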